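/- arXiv:1901.05562 — 4 statements merged into one kernel-verified Lean document; each statement's English description precedes it below -/
import Mathlib

section
/- Let n = |Xm| and fix ε, Δ > 0. For each i ∈ {0, …, n}, the total normalised probability that the exponential mechanism with quality function q outputs a set of quality value i satisfies Σ_{R ⊆ Xm, q(R) = i} exp(q(R)·ε/(2Δ)) / Σ_{S ⊆ Xm} exp(q(S)·ε/(2Δ)) = C(n, i)·exp(i·ε/(2Δ)) / (1 + exp(ε/(2Δ)))^n. -/
/-!
The map `R ↦ (R ∩ R*) ∪ (Xm \ (R ∪ R*))` (the complement in `Xm` of the symmetric difference of `R`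
and `R*`) is an involution of the power set of `Xm`, and the quality of `R` is the cardinality of its
image. Hence any sum over `R` of a function of the quality equals the same sum with the quality
replaced by the cardinality: exactly `C(n, i)` sets have quality `i`, and by the binomial theorem
the normalising constant is `(1 + exp (ε / (2Δ))) ^ n`.
-/

/-- The quality of a uniformly random subset of `X` is distributed as its cardinality. -/
theorem sum_quality_eq {α : Type*} [DecidableEq α] (X T : Finset α) (hT : T ⊆ X) (f : ℕ → ℝ) :
    ∑ R ∈ X.powerset, f ((R ∩ T).card + (X \ (R ∪ T)).card)
      = ∑ k ∈ Finset.range (X.card + 1), (X.card.choose k : ℝ) * f k := by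
  have hinv : ∀ R ∈ X.powerset,
      (((R ∩ T) ∪ (X \ (R ∪ T))) ∩ T) ∪ (X \ (((R ∩ T) ∪ (X \ (R ∪ T))) ∪ T)) = R := by
    intro R hR
    rw [Finset.mem_powerset] at hR
    ext x
    have h1 := @hR x
    have h2 := @hT x
    simp only [Finset.mem_union, Finset.mem_inter, Finset.mem_sdiff]
    tauto
  have hmem : ∀ R ∈ X.powerset, (R ∩ T) ∪ (X \ (R ∪ T)) ∈ X.powerset := by
    intro R hR
    rw [Finset.mem_powerset] at hR ⊢
    exact Finset.union_subset (Finset.inter_subset_left.trans hR) Finset.sdiff_subset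
  have hbij : ∑ R ∈ X.powerset, f ((R ∩ T).card + (X \ (R ∪ T)).card)
      = ∑ R ∈ X.powerset, f R.card := by
    refine Finset.sum_nbij' (fun R => (R ∩ T) ∪ (X \ (R ∪ T)))
      (fun R => (R ∩ T) ∪ (X \ (R ∪ T))) hmem hmem hinv hinv ?_
    intro R _
    rw [Finset.card_union_of_disjoint]
    rw [Finset.disjoint_left]
    intro x hx
    simp only [Finset.mem_union, Finset.mem_inter, Finset.mem_sdiff] at hx ⊢
    tauto
  rw [hbij, Finset.sum_powerset_apply_card]
  simp only [nsmul_eq_mul]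

/-- The total normalised probability that the exponential mechanism
outputs a set of quality value `i` is `C(n,i)·exp(i·ε/(2Δ)) / (1 + exp(ε/(2Δ)))^n`. -/
theorem stmt_4 {α : Type*} [DecidableEq α] (Xm Rstar : Finset α) (hRstar : Rstar ⊆ Xm)
    (n : ℕ) (hn : n = Xm.card) (ε Δ : ℝ) (hε : 0 < ε) (hΔ : 0 < Δ)
    (i : ℕ) (hi : i ≤ n) :
    (∑ R ∈ Xm.powerset.filter
          (fun R => (R ∩ Rstar).card + (Xm \ (R ∪ Rstar)).card = i),
        Real.exp ((((R ∩ Rstar).card + (Xm \ (R ∪ Rstar)).card : ℕ) : ℝ) * ε / (2 * Δ)))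
      / (∑ S ∈ Xm.powerset,
          Real.exp ((((S ∩ Rstar).card + (Xm \ (S ∪ Rstar)).card : ℕ) : ℝ) * ε / (2 * Δ)))
      = (n.choose i : ℝ) * Real.exp ((i : ℝ) * ε / (2 * Δ))
          / (1 + Real.exp (ε / (2 * Δ))) ^ n := by
  subst hn
  congr 1
  · rw [Finset.sum_filter]
    have h := sum_quality_eq Xm Rstar hRstar
      (fun k => if k = i then Real.exp ((k : ℝ) * ε / (2 * Δ)) else 0)
    rw [h]
    simp only [mul_ite, mul_zero]
    rw [Finset.sum_ite_eq', if_pos (Finset.mem_range.mpr (by omega))]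
  · have h := sum_quality_eq Xm Rstar hRstar (fun k => Real.exp ((k : ℝ) * ε / (2 * Δ)))
    rw [h, add_comm (1 : ℝ), add_pow]
    refine Finset.sum_congr rfl fun k _ => ?_
    rw [one_pow, mul_one, mul_comm, ← Real.exp_nat_mul, mul_div_assoc]
end

section
/- Let the finite vertex set V be partitioned as V = V_X ⊔ V_Y, fix a ∈ V_X and a finite set R ⊆ V_X \ {a}, and let G and G' be simple undirected graphs on V whose edge sets differ in exactly one edge {u, w} with u, w ∈ V_Y. Let N = {v ∈ V_Y : {a, v} is an edge of G} (which equals the corresponding set for G', since the differing edge has both endpoints in V_Y and a ∈ V_X). For i ∈ R and j ∈ N, define T_{ij}(G) = |{k ∈ N : {i,k} and {k,j} are edges of G}|. Then Σ_{i ∈ R} Σ_{j ∈ N} |T_{ij}(G) − T_{ij}(G')| ≤ 2·|R|. -/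
/-!
For fixed `i ∈ R` the edges at `i` are the same in both graphs, because `i ∈ V_X` is neither
`u` nor `w`. Hence a 2-path `i - k - j` can be affected only when `{k, j} = {u, w}`: nothing
changes unless `j = u` (then only `k = w` matters) or `j = w` (then only `k = u` matters). Each
`i` thus contributes at most `2`.
-/

theorem abs_card_sub_card_le_one_of_erase_eq {V : Type*} [DecidableEq V] {A B : Finset V} (x : V)
    (h : A.erase x = B.erase x) : |(A.card : ℤ) - (B.card : ℤ)| ≤ 1 := by
  have h1 := A.pred_card_le_card_erase (a := x)
  have h2 := B.pred_card_le_card_erase (a := x)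
  have h3 := A.card_erase_le (a := x)
  have h4 := B.card_erase_le (a := x)
  rw [h] at h1 h3
  rw [abs_le]
  omega

/-- If `G, G'` differ in exactly one edge `{u,w}` with `u, w ∈ V_Y`, then
the vector of 2-path counts `T_{ij}` (over `i ∈ R`, `j ∈ N`, intermediate node in `N`)
changes by at most `2·|R|` in `L1` norm. -/
theorem stmt_11 {V : Type*} [Fintype V] [DecidableEq V]
    (VX VY : Finset V) (hdisj : Disjoint VX VY) (hcover : VX ∪ VY = Finset.univ)
    (a : V) (ha : a ∈ VX) (R : Finset V) (hR : R ⊆ VX.erase a)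
    (G G' : SimpleGraph V) [DecidableRel G.Adj] [DecidableRel G'.Adj]
    (u w : V) (hu : u ∈ VY) (hw : w ∈ VY) (huw : u ≠ w)
    (hdiff : symmDiff G.edgeFinset G'.edgeFinset = {s(u, w)})
    (N : Finset V) (hN : N = VY.filter fun v => G.Adj a v) :
    ∑ i ∈ R, ∑ j ∈ N,
        |((N.filter fun k => G.Adj i k ∧ G.Adj k j).card : ℤ)
          - ((N.filter fun k => G'.Adj i k ∧ G'.Adj k j).card : ℤ)|
      ≤ (2 * R.card : ℤ) := by
  have hadj : ∀ x y, s(x, y) ≠ s(u, w) → (G.Adj x y ↔ G'.Adj x y) := by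
    intro x y hxy
    have h : s(x, y) ∉ symmDiff G.edgeFinset G'.edgeFinset := by simpa [hdiff] using hxy
    simp only [Finset.mem_symmDiff, SimpleGraph.mem_edgeFinset, SimpleGraph.mem_edgeSet] at h
    tauto
  have hrow : ∀ i ∈ R, ∑ j ∈ N,
        |((N.filter fun k => G.Adj i k ∧ G.Adj k j).card : ℤ)
          - ((N.filter fun k => G'.Adj i k ∧ G'.Adj k j).card : ℤ)| ≤ 2 := by
    intro i hi
    have hiX : i ∈ VX := Finset.mem_of_mem_erase (hR hi)
    have hiu : i ≠ u := fun h => Finset.disjoint_left.mp hdisj hiX (h ▸ hu)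
    have hiw : i ≠ w := fun h => Finset.disjoint_left.mp hdisj hiX (h ▸ hw)
    have hik : ∀ k, (G.Adj i k ↔ G'.Adj i k) := fun k => hadj i k (by simp [hiu, hiw])
    have hterm : ∀ j ∈ N,
        |((N.filter fun k => G.Adj i k ∧ G.Adj k j).card : ℤ)
          - ((N.filter fun k => G'.Adj i k ∧ G'.Adj k j).card : ℤ)|
        ≤ (if j = u then 1 else 0) + (if j = w then 1 else 0) := by
      intro j _
      by_cases hju : j = u
      · subst hju
        rw [if_pos rfl, if_neg huw, add_zero]
        refine abs_card_sub_card_le_one_of_erase_eq w (Finset.ext fun k => ?_)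
        have := hadj k j
        have := hik k
        simp only [Finset.mem_erase, Finset.mem_filter]
        by_cases hk : k = w <;> simp_all
      by_cases hjw : j = w
      · subst hjw
        rw [if_pos rfl, if_neg hju, zero_add]
        refine abs_card_sub_card_le_one_of_erase_eq u (Finset.ext fun k => ?_)
        have := hadj k j
        have := hik k
        simp only [Finset.mem_erase, Finset.mem_filter]
        by_cases hk : k = u <;> simp_all
      · have hkj : ∀ k, (G.Adj k j ↔ G'.Adj k j) := fun k => hadj k j (by simp [hju, hjw])
        simp [hik, hkj, hju, hjw]
    refine (Finset.sum_le_sum hterm).trans ?_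
    rw [Finset.sum_add_distrib, Finset.sum_ite_eq', Finset.sum_ite_eq']
    split_ifs <;> norm_num
  refine (Finset.sum_le_sum hrow).trans ?_
  simp [mul_comm]
end

section
/- Let the finite vertex set V be partitioned as V = V_X ⊔ V_Y, fix a ∈ V_X and a finite set R ⊆ V_X \ {a}, and let G and G' be simple undirected graphs on V, agreeing on all edges incident to V_X, whose edge sets differ in exactly one edge {u, w} with u, w ∈ V_Y. Let N = {v ∈ V_Y : {a, v} is an edge of G} (the same for G'), assume |N| ≥ 1, and let M = N ∪ R ∪ {a}. For distinct i, j ∈ N define K_{ij}(G) = |{k ∈ M : {i,k} and {k,j} are edges of G}| (which is ≥ 1 since a ∈ M is adjacent to both i and j), and define S(G) = Σ over unordered pairs {i,j} ⊆ N with i ≠ j and {i,j} not an edge of G, of 1/K_{ij}(G). Then |S(G) − S(G')| ≤ |N| − 1. -/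
/-!
Write each sum over all of `N.offDiag`, the summand being `0` at adjacent pairs. Each summand lies
in `[0, 1]`, since `a` is a common neighbour of all pairs in `N`, so its change is at most `1`. Every
adjacency other than that of `{u, w}` is the same in both graphs, so:

* at `{u, w}` the summand changes by at most `1`;
* at a pair sharing exactly one vertex with `{u, w}`, only one candidate for the middle vertex is
  affected, so the path count, which is at least `1`, changes by at most `1` and its reciprocal
  by at most `1 / 2`;
* at a pair disjoint from `{u, w}` nothing changes.

In all cases the change at `(i, j)` is at most `([i = u] + [i = w] + [j = u] + [j = w]) / 2`
(`abs_term_sub_le`). Each of these four indicators has sum at most `|N| - 1` over `N.offDiag`, so the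
ordered sums differ by at most `2 (|N| - 1)`.
-/

/-- The number of 2-edge paths from `i` to `j` with middle vertex in `M`. -/
def pathCount {V : Type*} (G : SimpleGraph V) [DecidableRel G.Adj] (M : Finset V) (i j : V) : ℕ :=
  (M.filter fun k => G.Adj i k ∧ G.Adj k j).card

/-- The contribution of the ordered pair `(i, j)`, set to `0` when `i` and `j` are adjacent. -/
noncomputable def term {V : Type*} (G : SimpleGraph V) [DecidableRel G.Adj] (M : Finset V)
    (i j : V) : ℝ :=
  if ¬ G.Adj i j then (1 : ℝ) / (pathCount G M i j : ℝ) else 0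

/-- If two graphs have the same adjacencies except possibly at `{u, w}`, then the path counts of a
pair other than `{u, w}` differ by at most one: the only middle vertex that can be affected is the
other endpoint of `{u, w}`, when the pair contains one of them. -/
lemma pathCount_le_succ {V : Type*} [DecidableEq V] (G G' : SimpleGraph V)
    [DecidableRel G.Adj] [DecidableRel G'.Adj] (M : Finset V) {u w i j : V}
    (h : ∀ x y, s(x, y) ≠ s(u, w) → (G.Adj x y ↔ G'.Adj x y))
    (hne : s(i, j) ≠ s(u, w)) :
    pathCount G M i j ≤ pathCount G' M i j + 1 := by
  have key : ∃ z, (M.filter fun k => G.Adj i k ∧ G.Adj k j) ⊆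
      insert z (M.filter fun k => G'.Adj i k ∧ G'.Adj k j) := by
    refine ⟨if i = u ∨ j = u then w else u, fun k hk => ?_⟩
    have h1 := h i k
    have h2 := h k j
    simp only [Finset.mem_insert, Finset.mem_filter, ne_eq, Sym2.eq_iff] at *
    grind
  obtain ⟨z, hz⟩ := key
  exact (Finset.card_le_card hz).trans (Finset.card_insert_le _ _)

lemma pathCount_eq {V : Type*} [DecidableEq V] (G G' : SimpleGraph V)
    [DecidableRel G.Adj] [DecidableRel G'.Adj] (M : Finset V) {u w i j : V}
    (h : ∀ x y, s(x, y) ≠ s(u, w) → (G.Adj x y ↔ G'.Adj x y))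
    (hiu : i ≠ u) (hiw : i ≠ w) (hju : j ≠ u) (hjw : j ≠ w) :
    pathCount G M i j = pathCount G' M i j := by
  unfold pathCount
  congr 1
  refine Finset.filter_congr fun k _ => ?_
  rw [h i k (by simp [hiu, hiw]), h k j (by simp [hju, hjw])]

lemma term_mem_Icc {V : Type*} (G : SimpleGraph V) [DecidableRel G.Adj] (M : Finset V)
    (i j : V) : 0 ≤ term G M i j ∧ term G M i j ≤ 1 := by
  unfold term
  split_ifs
  · simp
  · refine ⟨by positivity, ?_⟩
    rw [one_div]
    exact Nat.cast_inv_le_one _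

lemma one_div_sub_one_div_le {m n : ℕ} (hn : 1 ≤ n) (hmn : n ≤ m + 1) (hm : 1 ≤ m) :
    (1 : ℝ) / m - 1 / n ≤ 1 / 2 := by
  have hn' : (1 : ℝ) ≤ n := by exact_mod_cast hn
  have hm' : (1 : ℝ) ≤ m := by exact_mod_cast hm
  have hmn' : (n : ℝ) ≤ m + 1 := by exact_mod_cast hmn
  have h1 : (1 : ℝ) / (m + 1) ≤ 1 / n := one_div_le_one_div_of_le (by linarith) hmn'
  have h2 : (1 : ℝ) / m - 1 / (m + 1) ≤ 1 / 2 := by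
    rw [div_sub_div _ _ (by positivity) (by positivity), div_le_div_iff₀ (by positivity) (by norm_num)]
    nlinarith
  linarith

/-- The change of a summand is bounded by half the number of coincidences between the vertices of
the pair and those of the modified edge. -/
lemma abs_term_sub_le {V : Type*} [DecidableEq V] (G G' : SimpleGraph V)
    [DecidableRel G.Adj] [DecidableRel G'.Adj] (M : Finset V) {u w i j : V}
    (h : ∀ x y, s(x, y) ≠ s(u, w) → (G.Adj x y ↔ G'.Adj x y)) (hij : i ≠ j)
    (hK : 1 ≤ pathCount G M i j) (hK' : 1 ≤ pathCount G' M i j) :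
    |term G M i j - term G' M i j| ≤ (1 / 2 : ℝ) *
      ((if i = u then 1 else 0) + (if i = w then 1 else 0) +
        (if j = u then 1 else 0) + (if j = w then 1 else 0)) := by
  by_cases hne : s(i, j) = s(u, w)
  · have h1 := term_mem_Icc G M i j
    have h2 := term_mem_Icc G' M i j
    have h3 : |term G M i j - term G' M i j| ≤ 1 := by
      rw [abs_le]; constructor <;> linarith
    refine h3.trans ?_
    rw [Sym2.eq_iff] at hne
    rcases hne with ⟨rfl, rfl⟩ | ⟨rfl, rfl⟩ <;> simp [hij, hij.symm] <;> norm_num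
  · have hadj := h i j hne
    by_cases hd : i ≠ u ∧ i ≠ w ∧ j ≠ u ∧ j ≠ w
    · obtain ⟨h1, h2, h3, h4⟩ := hd
      have : term G M i j = term G' M i j := by
        simp only [term, hadj, pathCount_eq G G' M h h1 h2 h3 h4]
      simp [this, h1, h2, h3, h4]
    · have h3 : |term G M i j - term G' M i j| ≤ 1 / 2 := by
        unfold term
        simp only [hadj]
        split_ifs
        · norm_num
        · have e1 := pathCount_le_succ G G' M h hne
          have e2 := pathCount_le_succ G' G M (fun x y hxy => (h x y hxy).symm) hne
          have f1 := one_div_sub_one_div_le hK e1 hK'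
          have f2 := one_div_sub_one_div_le hK' e2 hK
          rw [abs_le]; constructor <;> linarith
      refine h3.trans ?_
      have : (1 : ℝ) ≤ (if i = u then 1 else 0) + (if i = w then 1 else 0) +
        (if j = u then 1 else 0) + (if j = w then 1 else 0) := by
        split_ifs <;> first | (exfalso; tauto) | norm_num
      linarith

lemma sum_fst_eq_le {V : Type*} [DecidableEq V] (N : Finset V) (hN : 1 ≤ N.card) (x : V) :
    ∑ p ∈ N.offDiag, (if p.1 = x then (1 : ℝ) else 0) ≤ (N.card : ℝ) - 1 := by
  rw [Finset.sum_boole]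
  by_cases hx : x ∈ N
  · have hsub : (N.offDiag.filter fun p => p.1 = x) ⊆ (N.erase x).image fun y => (x, y) := by
      rintro ⟨p, q⟩ hp
      simp only [Finset.mem_filter, Finset.mem_offDiag, Finset.mem_image, Finset.mem_erase] at *
      grind
    have hc := (Finset.card_le_card hsub).trans Finset.card_image_le
    rw [Finset.card_erase_of_mem hx] at hc
    rw [← Nat.cast_one, ← Nat.cast_sub hN]
    exact_mod_cast hc
  · have : (N.offDiag.filter fun p => p.1 = x) = ∅ := by
      rw [Finset.filter_eq_empty_iff]
      rintro ⟨p, q⟩ hp rfl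
      exact hx (Finset.mem_offDiag.1 hp).1
    rw [this, Finset.card_empty, Nat.cast_zero, sub_nonneg]
    exact_mod_cast hN

lemma sum_snd_eq_le {V : Type*} [DecidableEq V] (N : Finset V) (hN : 1 ≤ N.card) (x : V) :
    ∑ p ∈ N.offDiag, (if p.2 = x then (1 : ℝ) else 0) ≤ (N.card : ℝ) - 1 := by
  refine le_trans (le_of_eq ?_) (sum_fst_eq_le N hN x)
  refine Finset.sum_nbij' Prod.swap Prod.swap ?_ ?_ ?_ ?_ ?_ <;>
    simp +contextual [Finset.mem_offDiag, ne_comm]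


/-- Sensitivity of the partial EBC sum `S_Y`: if `G, G'` agree on all edges
incident to `V_X` and differ in exactly one edge `{u,w}` with `u, w ∈ V_Y`, then
`|S(G) − S(G')| ≤ |N| − 1`, where `S(G)` sums, over unordered pairs of distinct
non-adjacent `i, j ∈ N`, the reciprocals of the 2-path counts `K_{ij}(G)` with
intermediate node in `M = N ∪ R ∪ {a}` (the sum over unordered pairs is encoded as half
the sum over ordered pairs of distinct elements). -/
theorem stmt_12 {V : Type*} [Fintype V] [DecidableEq V]
    (VX VY : Finset V) (hdisj : Disjoint VX VY) (hcover : VX ∪ VY = Finset.univ)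
    (a : V) (ha : a ∈ VX) (R : Finset V) (hR : R ⊆ VX.erase a)
    (G G' : SimpleGraph V) [DecidableRel G.Adj] [DecidableRel G'.Adj]
    (hagree : ∀ v₁ v₂ : V, v₁ ∈ VX → (G.Adj v₁ v₂ ↔ G'.Adj v₁ v₂))
    (u w : V) (hu : u ∈ VY) (hw : w ∈ VY) (huw : u ≠ w)
    (hdiff : symmDiff G.edgeFinset G'.edgeFinset = {s(u, w)})
    (N : Finset V) (hN : N = VY.filter fun v => G.Adj a v) (hNcard : 1 ≤ N.card)
    (M : Finset V) (hM : M = N ∪ R ∪ {a}) :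
    |(1 / 2 : ℝ) * ∑ p ∈ N.offDiag.filter (fun p => ¬ G.Adj p.1 p.2),
          (1 : ℝ) / ((M.filter fun k => G.Adj p.1 k ∧ G.Adj k p.2).card : ℝ)
      - (1 / 2 : ℝ) * ∑ p ∈ N.offDiag.filter (fun p => ¬ G'.Adj p.1 p.2),
          (1 : ℝ) / ((M.filter fun k => G'.Adj p.1 k ∧ G'.Adj k p.2).card : ℝ)|
      ≤ (N.card : ℝ) - 1 := by
  have hadj : ∀ x y, s(x, y) ≠ s(u, w) → (G.Adj x y ↔ G'.Adj x y) := by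
    intro x y hxy
    have hm : s(x, y) ∉ symmDiff G.edgeFinset G'.edgeFinset := by
      rw [hdiff, Finset.mem_singleton]; exact hxy
    rw [Finset.mem_symmDiff, SimpleGraph.mem_edgeFinset, SimpleGraph.mem_edgeFinset,
      SimpleGraph.mem_edgeSet, SimpleGraph.mem_edgeSet] at hm
    tauto
  have haN : ∀ v ∈ N, G.Adj a v := by
    intro v hv
    rw [hN] at hv
    exact (Finset.mem_filter.1 hv).2
  have haM : a ∈ M := by simp [hM]
  have hK : ∀ i ∈ N, ∀ j ∈ N, 1 ≤ pathCount G M i j := fun i hi j hj =>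
    Finset.card_pos.2 ⟨a, Finset.mem_filter.2 ⟨haM, (haN i hi).symm, haN j hj⟩⟩
  have hK' : ∀ i ∈ N, ∀ j ∈ N, 1 ≤ pathCount G' M i j := fun i hi j hj =>
    Finset.card_pos.2 ⟨a, Finset.mem_filter.2
      ⟨haM, ((hagree a i ha).1 (haN i hi)).symm, (hagree a j ha).1 (haN j hj)⟩⟩
  rw [Finset.sum_filter, Finset.sum_filter, ← mul_sub, ← Finset.sum_sub_distrib]
  change |(1 / 2 : ℝ) * ∑ p ∈ N.offDiag, (term G M p.1 p.2 - term G' M p.1 p.2)| ≤ _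
  have hsum : |∑ p ∈ N.offDiag, (term G M p.1 p.2 - term G' M p.1 p.2)| ≤
      2 * ((N.card : ℝ) - 1) := by
    refine (Finset.abs_sum_le_sum_abs _ _).trans ?_
    refine (Finset.sum_le_sum fun p hp => ?_).trans (b := ∑ p ∈ N.offDiag, (1 / 2 : ℝ) *
      ((if p.1 = u then 1 else 0) + (if p.1 = w then 1 else 0) +
        (if p.2 = u then 1 else 0) + (if p.2 = w then 1 else 0))) ?_
    · obtain ⟨h1, h2, h3⟩ := Finset.mem_offDiag.1 hp
      exact abs_term_sub_le G G' M hadj h3 (hK _ h1 _ h2) (hK' _ h1 _ h2)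
    · rw [← Finset.mul_sum, Finset.sum_add_distrib, Finset.sum_add_distrib,
        Finset.sum_add_distrib]
      linarith [sum_fst_eq_le N hNcard u, sum_fst_eq_le N hNcard w,
        sum_snd_eq_le N hNcard u, sum_snd_eq_le N hNcard w]
  rw [abs_mul, abs_of_pos (by norm_num : (0 : ℝ) < 1 / 2)]
  linarith
end

section
/- Let Θ be a finite nonempty set, q : {0,1}^n × Θ → ℝ a quality function, and Δ > 0 such that |q(D, θ) − q(D', θ)| ≤ Δ for all θ ∈ Θ and all neighbouring D, D' ∈ {0,1}^n, and let ε > 0. Then for all neighbouring D, D' and every θ ∈ Θ, exp(q(D, θ)·ε/(2Δ)) / Σ_{θ'∈Θ} exp(q(D, θ')·ε/(2Δ)) ≤ exp(ε) · exp(q(D', θ)·ε/(2Δ)) / Σ_{θ'∈Θ} exp(q(D', θ')·ε/(2Δ)). (This is ε-differential privacy of the exponential mechanism over a finite response set.) -/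
/-!
Changing one coordinate moves each exponent `q D θ * ε / (2 * Δ)` by at most `ε / 2`, so each
weight changes by a factor of at most `exp (ε / 2)`. The numerator contributes one such factor, and
the normalising sum, compared term by term, contributes the other; together they give `exp ε`.
-/

/-- Databases are bit-vectors; `D, D'` are neighbouring if they differ in exactly one
coordinate. -/
def Neighbor {n : ℕ} (D D' : Fin n → Bool) : Prop :=
  ∃ i : Fin n, D i ≠ D' i ∧ ∀ j : Fin n, j ≠ i → D j = D' j

/-- `ε`-differential privacy of the exponential mechanism over a finite
response set `Θ`, for a quality function `q` of sensitivity at most `Δ`. -/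
theorem stmt_16 {n : ℕ} {Θ : Type*} [Fintype Θ] [Nonempty Θ]
    (q : (Fin n → Bool) → Θ → ℝ) (Δ ε : ℝ) (hΔ : 0 < Δ) (hε : 0 < ε)
    (hsens : ∀ (θ : Θ) (D D' : Fin n → Bool), Neighbor D D' → |q D θ - q D' θ| ≤ Δ) :
    ∀ D D', Neighbor D D' → ∀ θ : Θ,
      Real.exp (q D θ * ε / (2 * Δ)) / (∑ θ' : Θ, Real.exp (q D θ' * ε / (2 * Δ)))
        ≤ Real.exp ε *
          (Real.exp (q D' θ * ε / (2 * Δ))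
            / (∑ θ' : Θ, Real.exp (q D' θ' * ε / (2 * Δ)))) := by
  intro D D' hN θ
  have hpos : ∀ E : Fin n → Bool, 0 < ∑ θ' : Θ, Real.exp (q E θ' * ε / (2 * Δ)) := fun E =>
    Finset.sum_pos (fun _ _ => Real.exp_pos _) Finset.univ_nonempty
  have hratio : ∀ a b : ℝ, a - b ≤ Δ →
      Real.exp (a * ε / (2 * Δ)) ≤ Real.exp (ε / 2) * Real.exp (b * ε / (2 * Δ)) := by
    intro a b hab
    rw [← Real.exp_add, Real.exp_le_exp]
    have h : ε / 2 + b * ε / (2 * Δ) = (Δ + b) * ε / (2 * Δ) := by field_simp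
    rw [h]
    gcongr
    linarith
  have hnum := hratio _ _ (abs_le.1 (hsens θ D D' hN)).2
  have hden : ∑ θ' : Θ, Real.exp (q D' θ' * ε / (2 * Δ))
      ≤ Real.exp (ε / 2) * ∑ θ' : Θ, Real.exp (q D θ' * ε / (2 * Δ)) := by
    rw [Finset.mul_sum]
    refine Finset.sum_le_sum fun θ' _ => hratio _ _ ?_
    linarith [(abs_le.1 (hsens θ' D D' hN)).1]
  have hexp : Real.exp ε = Real.exp (ε / 2) * Real.exp (ε / 2) := by
    rw [← Real.exp_add, add_halves]
  rw [← mul_div_assoc, div_le_div_iff₀ (hpos D) (hpos D'), hexp]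
  calc _ ≤ _ := mul_le_mul hnum hden (hpos D').le (by positivity)
    _ = _ := by ring
end
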